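/- Assume ℓ(C) ≥ 3, i.e. at least three of the degrees e_j equal 1. Then the S-module D₀(f) is generated by the set G = {ρ_1, ..., ρ_{m−1}}, and G is a minimal generating set: no ρ_j (1 ≤ j ≤ m−1) lies in the S-submodule of S³ generated by the other m−2 elements of G. In particular C is an (m−1)-syzygy curve with exponents d_1 = ⋯ = d_{m−1} = d−2. -/

import Mathlib

open MvPolynomial

noncomputable abbrev S : Type := MvPolynomial (Fin 3) ℂ

/-- The gradient `∇g = (g_x, g_y, g_z)` of a polynomial `g ∈ S = ℂ[x,y,z]`. -/
noncomputable def grad (g : S) : Fin 3 → S := fun t => pderiv t g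

/-- The syzygy triple `ρ_j = Σ_{i≠j} (∏_{k≠i,j} f_k) (∇f_i × ∇f_j)`
of the 2-form `ω_j = df ∧ df_j/f_j`. -/
noncomputable def rho {m : ℕ} (F : Fin m → S) (j : Fin m) : Fin 3 → S :=
  ∑ i ∈ Finset.univ.erase j,
    (∏ k ∈ (Finset.univ.erase j).erase i, F k) • crossProduct (grad (F i)) (grad (F j))

/-- The Jacobian syzygy module `D₀(f) = {(a,b,c) ∈ S³ : a f_x + b f_y + c f_z = 0}`. -/
noncomputable def D0 (f : S) : Submodule S (Fin 3 → S) where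
  carrier := {v | ∑ t, v t * pderiv t f = 0}
  add_mem' {a b} ha hb := by
    simp only [Set.mem_setOf_eq, Pi.add_apply, add_mul, Finset.sum_add_distrib] at *
    rw [ha, hb, add_zero]
  zero_mem' := by simp
  smul_mem' c v hv := by
    simp only [Set.mem_setOf_eq, Pi.smul_apply, smul_eq_mul, mul_assoc, ← Finset.mul_sum] at *
    rw [hv, mul_zero]

/-- The syzygy triple `σ^x = (0, f_z, −f_y)` of the 2-form `df ∧ dx`. -/
noncomputable def sigx (f : S) : Fin 3 → S := ![0, pderiv 2 f, -pderiv 1 f]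
/-- The syzygy triple `σ^y = (−f_z, 0, f_x)` of the 2-form `df ∧ dy`. -/
noncomputable def sigy (f : S) : Fin 3 → S := ![-pderiv 2 f, 0, pderiv 0 f]
/-- The syzygy triple `σ^z = (f_y, −f_x, 0)` of the 2-form `df ∧ dz`. -/
noncomputable def sigz (f : S) : Fin 3 → S := ![pderiv 1 f, -pderiv 0 f, 0]

/-!
Write `f = ∏ f_j` and `X = (x, y, z)`. A vector field `w` with `f_j ∣ w × ∇f_j` for all `j`
corresponds to a 1-form `w / f` with logarithmic poles along the normal crossing divisor `f = 0`.
Away from the origin such a form is locally a combination of the `df_j / f_j` and a regular form,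
and when three of the `f_j` are independent linear forms the regular forms are also combinations
of the `df_j`. By the Nullstellensatz, the ideal of all `s` with `s w` in the span `N` of the
vectors `(f / f_j) ∇f_j` then contains a power of the ideal `(x, y, z)`. The relations between
these vectors form a projective module, so `S³ / N` has positive depth, and `w` itself
lies in `N`.

If `u` is a Jacobian syzygy of `f`, then `w = u × X` has the above property, say
`w = ∑ g_j (f / f_j) ∇f_j`. Taking the cross product with `∇f` gives `d u = ∑ g_j ρ_j`. Since
`∑ ρ_j = 0`, one of the `ρ_j` can be omitted.

Conversely, if `∑ g_j ρ_j = 0`, then `∇f` and `∑ g_j (f / f_j) ∇f_j` are parallel, and contraction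
with `X` shows that `f_j` divides `d g_j - ∑ e_i g_i`. At the origin all `g_j` therefore take the
same value, so that a relation between the remaining `ρ_j` has all its coefficients in the maximal
ideal of the origin.
-/

section MinimalGenerators

variable {R K M ι κ : Type*} [CommRing R] [AddCommGroup M] [Module R M]

theorem map_coeff_eq_zero_of_sum_comp_eq_zero [CommRing K] {φ : R →+* K} [Fintype ι] [Fintype κ]
    {b : ι → M} (hb : ∀ g : ι → R, ∑ i, g i • b i = 0 → ∀ i j, φ (g i) = φ (g j))
    {s : κ → ι} (hs : Function.Injective s) {o : ι} (ho : o ∉ Set.range s)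
    {g : κ → R} (hg : ∑ j, g j • b (s j) = 0) (j : κ) : φ (g j) = 0 := by
  have hext : ∑ i, Function.extend s g 0 i • b i = 0 := by
    rw [← hg]
    refine (Fintype.sum_of_injective s hs _ _ (fun i hi => ?_) fun j => ?_).symm
    · rw [Function.extend_apply' _ _ _ hi, Pi.zero_apply, zero_smul]
    · rw [hs.extend_apply]
  have hconst := hb _ hext (s j) o
  rwa [hs.extend_apply, Function.extend_apply' _ _ _ ho, Pi.zero_apply, map_zero] at hconst

theorem notMem_span_image_compl [CommRing K] [Nontrivial K] {φ : R →+* K} [Fintype κ] {b : κ → M}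
    (hb : ∀ g : κ → R, ∑ j, g j • b j = 0 → ∀ j, φ (g j) = 0) (i : κ) :
    b i ∉ Submodule.span R (b '' {i}ᶜ) := by
  classical
  intro hi
  obtain ⟨c, hc, hci⟩ := (Finsupp.mem_span_image_iff_linearCombination R).1 hi
  have hc0 : c i = 0 := Finsupp.notMem_support_iff.1 fun h => (Finsupp.mem_supported R c).1 hc h rfl
  have hrel : Finsupp.linearCombination R b (c - Finsupp.single i 1) = 0 := by
    rw [map_sub, hci, Finsupp.linearCombination_single, one_smul, sub_self]
  rw [Finsupp.linearCombination_apply, Finsupp.sum_fintype _ _ fun j => zero_smul R (b j)] at hrel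
  simpa [hc0] using hb _ hrel i

theorem card_le_card_of_span_eq_span_range [Field K] {φ : R →+* K} [Fintype κ] {b : κ → M}
    (hb : ∀ g : κ → R, ∑ j, g j • b j = 0 → ∀ j, φ (g j) = 0) {T : Finset M}
    (hT : Submodule.span R (T : Set M) = Submodule.span R (Set.range b)) :
    Fintype.card κ ≤ T.card := by
  classical
  have hmem_T (j : κ) : ∃ a : T → R, ∑ t, a t • (t : M) = b j := by
    have : b j ∈ Submodule.span R (Set.range ((↑) : T → M)) := by
      rw [Subtype.range_coe_subtype, Finset.setOfPred_mem, hT]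
      exact Submodule.subset_span ⟨j, rfl⟩
    exact (Submodule.mem_span_range_iff_exists_fun R).1 this
  have hmem_b (t : T) : ∃ g : κ → R, ∑ k, g k • b k = t :=
    (Submodule.mem_span_range_iff_exists_fun R).1 (hT ▸ Submodule.subset_span t.2)
  choose A hA using hmem_T
  choose G hG using hmem_b
  have hAG (j k : κ) : φ (∑ t, A j t * G t k) = (1 : Matrix κ κ K) j k := by
    have hrel : ∑ k, (∑ t, A j t * G t k - (1 : Matrix κ κ R) j k) • b k = 0 := by
      simp only [sub_smul, Finset.sum_sub_distrib, Finset.sum_smul, mul_smul]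
      rw [Finset.sum_comm]
      simp only [← Finset.smul_sum, hG, hA, Matrix.one_apply, ite_smul, one_smul, zero_smul,
        Finset.sum_ite_eq, Finset.mem_univ, if_true, sub_self]
    have := hb _ hrel k
    rw [map_sub, sub_eq_zero] at this
    rw [this, Matrix.one_apply, Matrix.one_apply]
    split <;> simp
  have hprod : (Matrix.of A).map φ * (Matrix.of G).map φ = 1 := by
    ext j k
    rw [← hAG, map_sum]
    simp [Matrix.mul_apply]
  calc Fintype.card κ = ((Matrix.of A).map φ * (Matrix.of G).map φ).rank := by
        rw [hprod, Matrix.rank_one]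
    _ ≤ ((Matrix.of A).map φ).rank := Matrix.rank_mul_le_left _ _
    _ ≤ Fintype.card T := Matrix.rank_le_card_width _
    _ = T.card := Fintype.card_coe T

theorem span_range_comp_eq_of_sum_eq_zero [Fintype ι] {b : ι → M} (hb : ∑ i, b i = 0)
    {s : κ → ι} {o : ι} (hso : {o}ᶜ ⊆ Set.range s) :
    Submodule.span R (Set.range (b ∘ s)) = Submodule.span R (Set.range b) := by
  classical
  have hmem {i : ι} (hi : i ≠ o) : b i ∈ Submodule.span R (Set.range (b ∘ s)) := by
    obtain ⟨j, rfl⟩ := hso hi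
    exact Submodule.subset_span ⟨j, rfl⟩
  refine le_antisymm (Submodule.span_mono (Set.range_comp_subset_range s b))
    (Submodule.span_le.2 ?_)
  rintro _ ⟨i, rfl⟩
  by_cases hi : i = o
  · have : b i = -∑ k ∈ Finset.univ.erase i, b k := by
      rw [eq_neg_iff_add_eq_zero, Finset.add_sum_erase _ _ (Finset.mem_univ i), hb]
    rw [this]
    exact neg_mem (sum_mem fun k hk => hmem (hi ▸ Finset.ne_of_mem_erase hk))
  · exact hmem hi

end MinimalGenerators

section Nullstellensatz

variable {σ K : Type*} [Field K] [IsAlgClosed K]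

theorem idealOfVars_pow_le_of_eval_ne_zero [Finite σ] {I : Ideal (MvPolynomial σ K)}
    (hI : ∀ p : σ → K, p ≠ 0 → ∃ s ∈ I, eval p s ≠ 0) : ∃ n, idealOfVars σ K ^ n ≤ I := by
  refine Ideal.exists_pow_le_of_le_radical_of_fg ?_ (idealOfVars_fg σ K)
  rw [← vanishingIdeal_zeroLocus_eq_radical (K := K), idealOfVars, Ideal.span_le]
  rintro _ ⟨t, rfl⟩ p hp
  obtain rfl : p = 0 := by
    by_contra hne
    obtain ⟨s, hs, hps⟩ := hI p hne
    exact hps (by simpa [aeval_eq_eval] using hp s hs)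
  simp

theorem X_mem_idealOfVars {R : Type*} [CommSemiring R] (t : σ) : X t ∈ idealOfVars σ R :=
  Ideal.subset_span ⟨t, rfl⟩

theorem eq_top_of_idealOfVars_pow_le {R : Type*} [CommRing R] {I : Ideal (MvPolynomial σ R)}
    (hsat : ∀ s : MvPolynomial σ R, (∀ t, X t * s ∈ I) → s ∈ I) {n : ℕ}
    (hn : idealOfVars σ R ^ n ≤ I) : I = ⊤ := by
  induction n with
  | zero => exact top_le_iff.1 (by simpa using hn)
  | succ n ih =>
    refine ih fun s hs => hsat s fun t => hn ?_
    rw [pow_succ']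
    exact Ideal.mul_mem_mul (X_mem_idealOfVars t) hs

theorem exists_ne_zero_eval_eq_zero [Finite σ] [Nontrivial σ] {g : MvPolynomial σ K}
    (hg : ¬IsUnit g) : ∃ p : σ → K, p ≠ 0 ∧ eval p g = 0 := by
  by_contra! h
  obtain ⟨n, hn⟩ := idealOfVars_pow_le_of_eval_ne_zero (I := Ideal.span {g})
    fun p hp => ⟨g, Ideal.mem_span_singleton_self g, h p hp⟩
  have hdvd (t : σ) : g ∣ X t ^ n := Ideal.mem_span_singleton.1
    (hn (Ideal.pow_mem_pow (X_mem_idealOfVars t) n))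
  obtain ⟨i, j, hij⟩ := exists_pair_ne σ
  have hX : IsRelPrime (X i : MvPolynomial σ K) (X j) :=
    (X_prime (R := K) (i := i)).irreducible.isRelPrime_iff_not_dvd.2 (by simp [X_dvd_X, hij])
  exact hg (hX.pow (hdvd i) (hdvd j))

end Nullstellensatz

section RegularSequences

theorem mem_span_X_image_of_X_mul_mem {σ R : Type*} [CommRing R] {s : Set σ} {i : σ} (hi : i ∉ s)
    {p : MvPolynomial σ R} (hp : X i * p ∈ Ideal.span (X '' s)) : p ∈ Ideal.span (X '' s) := by
  classical
  rw [mem_ideal_span_X_image] at hp ⊢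
  intro m hm
  obtain ⟨j, hj, hmj⟩ := hp (Finsupp.single i 1 + m) (by
    rw [support_X_mul]; simpa using hm)
  refine ⟨j, hj, ?_⟩
  rwa [Finsupp.add_apply, Finsupp.single_eq_of_ne (by rintro rfl; exact hi hj), zero_add] at hmj

theorem isWeaklyRegular_map_X {σ : Type*} (R : Type*) [CommRing R] {l : List σ} (hl : l.Nodup) :
    RingTheory.Sequence.IsWeaklyRegular (MvPolynomial σ R) (l.map (X (R := R))) where
  regular_mod_prev i hi := by
    have hspan : (Ideal.ofList ((l.map X).take i) : Ideal (MvPolynomial σ R)) =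
        Ideal.span (X '' {j | j ∈ l.take i}) := by
      rw [Ideal.ofList, ← List.map_take]
      congr 1
      ext p
      exact List.mem_map
    rw [isSMulRegular_quotient_iff_mem_of_smul_mem, smul_eq_mul, Ideal.mul_top, hspan]
    intro p hp
    refine mem_span_X_image_of_X_mul_mem (i := l[i]'(by simpa using hi)) ?_ (by simpa using hp)
    rintro h
    obtain ⟨k, hk, hki⟩ := List.mem_take_iff_getElem.1 h
    have := hl.getElem_inj_iff.1 hki
    omega

theorem isWeaklyRegular_of_flat {R P : Type*} [CommRing R] [AddCommGroup P]
    [Module R P] [Module.Flat R P] {rs : List R}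
    (hrs : RingTheory.Sequence.IsWeaklyRegular R rs) :
    RingTheory.Sequence.IsWeaklyRegular P rs :=
  ((TensorProduct.lid R P).isWeaklyRegular_congr rs).1
    (RingTheory.Sequence.IsWeaklyRegular.isWeaklyRegular_rTensor hrs)

end RegularSequences

section Saturation

variable {R M : Type*} [CommRing R] [AddCommGroup M] [Module R M]

theorem exists_eq_smul_of_smul_eq_smul {x y : R}
    (h : RingTheory.Sequence.IsWeaklyRegular M [x, y]) {u v : M} (huv : y • u = x • v) :
    ∃ r, u = x • r := by
  have hy := (isSMulRegular_quotient_iff_mem_of_smul_mem _ _).1 (h.regular_mod_prev 1 (by simp))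
  have hu : u ∈ Ideal.ofList [x] • (⊤ : Submodule R M) :=
    hy u (huv ▸ Submodule.smul_mem_smul (Ideal.subset_span (by simp)) trivial)
  rw [Ideal.ofList_singleton, Submodule.ideal_span_singleton_smul] at hu
  obtain ⟨r, -, hr⟩ := hu
  exact ⟨r, hr.symm⟩

theorem exists_eq_smul_add_smul_of_smul_eq {x y z : R}
    (h : RingTheory.Sequence.IsWeaklyRegular M [x, y, z]) {u v w : M}
    (huvw : z • u = x • v + y • w) : ∃ a b, u = x • a + y • b := by
  have hz := (isSMulRegular_quotient_iff_mem_of_smul_mem _ _).1 (h.regular_mod_prev 2 (by simp))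
  have hu : u ∈ Ideal.ofList [x, y] • (⊤ : Submodule R M) :=
    hz u (huvw ▸ add_mem (Submodule.smul_mem_smul (Ideal.subset_span (by simp)) trivial)
      (Submodule.smul_mem_smul (Ideal.subset_span (by simp)) trivial))
  rw [Ideal.ofList_cons_smul, Ideal.ofList_singleton, Submodule.ideal_span_singleton_smul] at hu
  obtain ⟨_, ⟨a, -, rfl⟩, _, ⟨b, -, rfl⟩, hab⟩ := Submodule.mem_sup.1 hu
  exact ⟨a, b, hab.symm⟩

theorem mem_range_of_smul_mem_range {Q : Type*} [AddCommGroup Q] [Module R Q] {Φ : Q →ₗ[R] M}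
    {x y z : R} (hQ : RingTheory.Sequence.IsWeaklyRegular Q [x, y])
    (hker : RingTheory.Sequence.IsWeaklyRegular (LinearMap.ker Φ) [x, y, z])
    (hM : IsSMulRegular M x) {w : M} (hx : x • w ∈ LinearMap.range Φ)
    (hy : y • w ∈ LinearMap.range Φ) (hz : z • w ∈ LinearMap.range Φ) : w ∈ LinearMap.range Φ := by
  obtain ⟨q₀, hq₀⟩ := hx
  obtain ⟨q₁, hq₁⟩ := hy
  obtain ⟨q₂, hq₂⟩ := hz
  have h₁ : y • q₀ - x • q₁ ∈ LinearMap.ker Φ := by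
    simp [hq₀, hq₁, smul_comm x y]
  have h₂ : z • q₀ - x • q₂ ∈ LinearMap.ker Φ := by
    simp [hq₀, hq₂, smul_comm x z]
  have h₃ : y • q₂ - z • q₁ ∈ LinearMap.ker Φ := by
    simp [hq₁, hq₂, smul_comm y z]
  have hkoszul : z • (y • q₀ - x • q₁) = x • (y • q₂ - z • q₁) + y • (z • q₀ - x • q₂) := by
    module
  -- This Koszul cycle in the kernel is a boundary, so `q₀` can be made a multiple of `x`.
  obtain ⟨a, b, hab⟩ := exists_eq_smul_add_smul_of_smul_eq hker
    (u := ⟨_, h₁⟩) (v := ⟨_, h₃⟩) (w := ⟨_, h₂⟩) (Subtype.ext hkoszul)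
  have hab' : y • q₀ - x • q₁ = x • (a : Q) + y • (b : Q) := congrArg Subtype.val hab
  obtain ⟨r, hr⟩ := exists_eq_smul_of_smul_eq_smul hQ (u := q₀ - b) (v := q₁ + a) (by
    linear_combination (norm := module) hab')
  refine ⟨r, hM ?_⟩
  simp only
  rw [← map_smul, ← hr, map_sub, hq₀, LinearMap.mem_ker.1 b.2, sub_zero]

end Saturation

section LogMap

variable {R M ι τ : Type*} [Fintype ι] [DecidableEq ι] [CommRing R] [AddCommGroup M] [Module R M]

/-- The complementary product `∏_{k ≠ j} f_k`, that is `f / f_j` for `f = ∏ f_k`. -/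
def cofactor (F : ι → R) (j : ι) : R := ∏ k ∈ Finset.univ.erase j, F k

theorem mul_cofactor (F : ι → R) (j : ι) : F j * cofactor F j = ∏ k, F k :=
  Finset.mul_prod_erase _ _ (Finset.mem_univ j)

theorem mul_prod_erase_erase (F : ι → R) {i j : ι} (hij : i ≠ j) :
    F i * ∏ k ∈ (Finset.univ.erase j).erase i, F k = cofactor F j :=
  Finset.mul_prod_erase _ _ (Finset.mem_erase.2 ⟨hij, Finset.mem_univ i⟩)

theorem dvd_cofactor (F : ι → R) {i j : ι} (hij : i ≠ j) : F i ∣ cofactor F j :=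
  ⟨_, (mul_prod_erase_erase F hij).symm⟩

theorem isRelPrime_cofactor [DecompositionMonoid R] {F : ι → R}
    (hF : Pairwise fun i j => IsRelPrime (F i) (F j)) (j : ι) : IsRelPrime (F j) (cofactor F j) :=
  IsRelPrime.prod_right fun _ hk => hF (Finset.ne_of_mem_erase hk).symm

theorem dvd_of_sum_mul_cofactor_eq_zero [DecompositionMonoid R] {F : ι → R}
    (hF : Pairwise fun i j => IsRelPrime (F i) (F j)) {a : ι → R}
    (ha : ∑ j, a j * cofactor F j = 0) (j : ι) : F j ∣ a j := by
  refine (isRelPrime_cofactor hF j).dvd_of_dvd_mul_right ?_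
  rw [← Finset.add_sum_erase _ _ (Finset.mem_univ j), add_eq_zero_iff_eq_neg] at ha
  rw [ha, dvd_neg]
  exact Finset.dvd_sum fun k hk => (dvd_cofactor F (Finset.ne_of_mem_erase hk).symm).mul_left _

/-- The map `g ↦ ∑ⱼ gⱼ (∏_{k ≠ j} f_k) vⱼ`. When `vⱼ = ∇fⱼ`, this is `f · ∑ⱼ gⱼ dfⱼ/fⱼ`, so that the
range is generated by `f` times the logarithmic differentials of the `fⱼ`. -/
def logMap (F : ι → R) (v : ι → M) : (ι → R) →ₗ[R] M :=
  Fintype.linearCombination R fun j => cofactor F j • v j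

theorem logMap_apply (F : ι → R) (v : ι → M) (g : ι → R) :
    logMap F v g = ∑ j, g j • cofactor F j • v j :=
  rfl

theorem logMap_mul (F : ι → R) (v : ι → M) (g : ι → R) :
    logMap F v (F * g) = (∏ k, F k) • Fintype.linearCombination R v g := by
  simp only [logMap_apply, Fintype.linearCombination_apply, Finset.smul_sum, smul_smul,
    Pi.mul_apply]
  refine Finset.sum_congr rfl fun j _ => ?_
  rw [← mul_cofactor F j]
  ring_nf

theorem cofactor_smul_mem_range_logMap (F : ι → R) (v : ι → M) (j : ι) :
    cofactor F j • v j ∈ LinearMap.range (logMap F v) :=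
  ⟨Pi.single j 1, by rw [logMap, Fintype.linearCombination_apply_single, one_smul]⟩

theorem dvd_of_forall_dvd_mul [IsDomain R] [UniqueFactorizationMonoid R] {f g : R} {h : τ → R}
    (hh : ∀ q, (∀ t, q ∣ h t) → IsUnit q) (hdvd : ∀ t, f ∣ g * h t) : f ∣ g := by
  rcases eq_or_ne g 0 with rfl | hg
  · exact dvd_zero f
  obtain ⟨a, b, c, hab, rfl, rfl⟩ := UniqueFactorizationMonoid.exists_reduced_factors' f g hg
  have ha (t : τ) : a ∣ h t := hab.dvd_of_dvd_mul_left <|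
    (mul_dvd_mul_iff_left (left_ne_zero_of_mul hg)).1 (by simpa only [mul_assoc] using hdvd t)
  exact mul_dvd_mul_left c ((hh a ha).dvd)

theorem projective_ker_of_surjective {P Q : Type*} [AddCommGroup P] [Module R P] [AddCommGroup Q]
    [Module R Q] [Module.Projective R P] [Module.Projective R Q] {Φ : Q →ₗ[R] P}
    (hΦ : Function.Surjective Φ) : Module.Projective R (LinearMap.ker Φ) := by
  obtain ⟨s, hs⟩ := Φ.exists_rightInverse_of_surjective (LinearMap.range_eq_top.2 hΦ)
  have hs' (x : P) : Φ (s x) = x := LinearMap.congr_fun hs x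
  refine Module.Projective.of_split (LinearMap.ker Φ).subtype
    ((LinearMap.id - s ∘ₗ Φ).codRestrict _ fun q => ?_) ?_
  · ext q
    simp
  · simp [hs']

section Kernel

variable [IsDomain R] [UniqueFactorizationMonoid R] {F : ι → R} {v : ι → τ → R}
  (hF : Pairwise fun i j => IsRelPrime (F i) (F j)) (hv : ∀ j q, (∀ t, q ∣ v j t) → IsUnit q)

include hF hv

theorem dvd_of_logMap_eq_zero {g : ι → R} (hg : logMap F v g = 0) (j : ι) : F j ∣ g j :=
  dvd_of_forall_dvd_mul (hv j) fun t =>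
    dvd_of_sum_mul_cofactor_eq_zero hF (a := fun j => g j * v j t)
      (by simpa [logMap_apply, mul_assoc, mul_left_comm, mul_comm] using congrFun hg t) j

theorem ker_logMap (hF₀ : ∀ j, F j ≠ 0) :
    LinearMap.ker (logMap F v) =
      (LinearMap.ker (Fintype.linearCombination R v)).map (LinearMap.mulLeft R F) := by
  ext g
  simp only [Submodule.mem_map, LinearMap.mem_ker, LinearMap.mulLeft_apply]
  constructor
  · intro hg
    choose h hh using dvd_of_logMap_eq_zero hF hv hg
    obtain rfl : g = F * h := funext hh
    rw [logMap_mul, smul_eq_zero, Finset.prod_eq_zero_iff] at hg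
    exact ⟨h, hg.resolve_left (by simpa using hF₀), rfl⟩
  · rintro ⟨h, hh, rfl⟩
    rw [logMap_mul, hh, smul_zero]

theorem flat_ker_logMap [Finite τ] (hF₀ : ∀ j, F j ≠ 0)
    (hspan : Submodule.span R (Set.range v) = ⊤) : Module.Flat R (LinearMap.ker (logMap F v)) := by
  have hsurj : Function.Surjective (Fintype.linearCombination R v) := by
    rw [← LinearMap.range_eq_top, Fintype.range_linearCombination, hspan]
  have hinj : Function.Injective (LinearMap.mulLeft R F) := fun g h hgh => funext fun j =>
    mul_left_cancel₀ (hF₀ j) (congrFun hgh j)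
  have := projective_ker_of_surjective hsurj
  rw [ker_logMap hF hv hF₀]
  exact Module.Flat.of_linearEquiv (Submodule.equivMapOfInjective _ hinj _).symm

end Kernel

theorem mem_range_logMap_of_X_smul_mem {K : Type*} [CommRing K] [IsDomain K]
    [UniqueFactorizationMonoid K] [Finite τ]
    {F : ι → MvPolynomial (Fin 3) K} {v : ι → τ → MvPolynomial (Fin 3) K}
    (hF : Pairwise fun i j => IsRelPrime (F i) (F j)) (hv : ∀ j q, (∀ t, q ∣ v j t) → IsUnit q)
    (hF₀ : ∀ j, F j ≠ 0)
    (hspan : Submodule.span (MvPolynomial (Fin 3) K) (Set.range v) = ⊤)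
    {w : τ → MvPolynomial (Fin 3) K}
    (hw : ∀ t : Fin 3, (X t : MvPolynomial (Fin 3) K) • w ∈ LinearMap.range (logMap F v)) :
    w ∈ LinearMap.range (logMap F v) := by
  have := flat_ker_logMap hF hv hF₀ hspan
  have hX : IsSMulRegular (τ → MvPolynomial (Fin 3) K) (X 0 : MvPolynomial (Fin 3) K) :=
    fun u w huw => smul_right_injective _ (X_ne_zero 0) huw
  exact mem_range_of_smul_mem_range
    (isWeaklyRegular_of_flat (isWeaklyRegular_map_X K (l := [0, 1]) (by decide)))
    (isWeaklyRegular_of_flat (isWeaklyRegular_map_X K (l := [0, 1, 2]) (by decide)))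
    hX (hw 0) (hw 1) (hw 2)

end LogMap

section LogSyzygy

open scoped Matrix

variable {R ι : Type*} [CommRing R]

theorem smul_eq_smul_add_single_cross (v w : Fin 3 → R) (t : Fin 3) :
    v t • w = w t • v + Pi.single t 1 ⨯₃ (w ⨯₃ v) := by
  rw [cross_cross_eq_smul_sub_smul', single_dotProduct, dotProduct_single, one_mul, mul_one]
  module

-- Cramer's rule for expanding `w` in `a`, `b`, `u`.
theorem cross_dotProduct_smul (a b u w : Fin 3 → R) :
    (a ⨯₃ b ⬝ᵥ u) • w = (w ⨯₃ b ⬝ᵥ u) • a + (a ⨯₃ w ⬝ᵥ u) • b + (a ⨯₃ b ⬝ᵥ w) • u := by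
  ext t
  fin_cases t <;> simp [cross_apply, dotProduct, Fin.sum_univ_three] <;> ring

variable [Fintype ι] [DecidableEq ι]

/-- The syzygy `ρⱼ = ∑_{i ≠ j} (∏_{k ≠ i,j} f_k) (vᵢ × vⱼ)`, for an arbitrary family of vectors `vᵢ`
in place of the gradients `∇fᵢ`. -/
def logSyzygy (F : ι → R) (v : ι → Fin 3 → R) (j : ι) : Fin 3 → R :=
  ∑ i ∈ Finset.univ.erase j,
    (∏ k ∈ (Finset.univ.erase j).erase i, F k) • (v i ⨯₃ v j)

theorem smul_logSyzygy (F : ι → R) (v : ι → Fin 3 → R) (j : ι) :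
    F j • logSyzygy F v j = logMap F v 1 ⨯₃ v j := by
  have hterm {i : ι} (hi : i ∈ Finset.univ.erase j) :
      F j • (∏ k ∈ (Finset.univ.erase j).erase i, F k) • (v i ⨯₃ v j) =
        (cofactor F i • v i) ⨯₃ v j := by
    have hij := Finset.ne_of_mem_erase hi
    rw [Finset.erase_right_comm, smul_smul, mul_prod_erase_erase F hij.symm, map_smul,
      LinearMap.smul_apply]
  rw [logSyzygy, Finset.smul_sum, Finset.sum_congr rfl fun _ => hterm, logMap_apply,
    ← Finset.add_sum_erase _ _ (Finset.mem_univ j)]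
  simp [cross_self, map_sum]

theorem logMap_one_cross_logMap (F : ι → R) (v : ι → Fin 3 → R) (g : ι → R) :
    logMap F v 1 ⨯₃ logMap F v g = (∏ k, F k) • ∑ j, g j • logSyzygy F v j := by
  rw [logMap_apply F v g, map_sum, Finset.smul_sum]
  refine Finset.sum_congr rfl fun j _ => ?_
  rw [map_smul, map_smul, ← smul_logSyzygy, ← mul_cofactor F j]
  module

variable [IsDomain R] {F : ι → R} (hF₀ : ∀ j, F j ≠ 0)

include hF₀ in
theorem sum_logSyzygy (v : ι → Fin 3 → R) : ∑ j, logSyzygy F v j = 0 := by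
  have h := logMap_one_cross_logMap F v 1
  simp only [cross_self, Pi.one_apply, one_smul] at h
  exact (smul_eq_zero.1 h.symm).resolve_left (Finset.prod_ne_zero_iff.2 fun j _ => hF₀ j)

include hF₀ in
theorem logSyzygy_dotProduct_logMap_one (v : ι → Fin 3 → R) (j : ι) :
    logSyzygy F v j ⬝ᵥ logMap F v 1 = 0 := by
  refine (mul_eq_zero.1 ?_).resolve_left (hF₀ j)
  rw [← smul_eq_mul, ← smul_dotProduct, smul_logSyzygy, dotProduct_comm, dot_self_cross]

end LogSyzygy

section JacobianSyzygies

open scoped Matrix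

variable {σ ι R : Type*} [CommRing R]

/-- The gradient `∇g`, the vector of the partial derivatives of `g`, over any coefficient ring and
in any set of variables. -/
noncomputable def formalGradient (g : MvPolynomial σ R) : σ → MvPolynomial σ R :=
  fun t => pderiv t g

theorem derivation_prod {A N : Type*} [CommRing A] [Algebra R A] [AddCommGroup N] [Module A N]
    [Module R N] [DecidableEq ι] (D : Derivation R A N) (s : Finset ι) (F : ι → A) :
    D (∏ i ∈ s, F i) = ∑ i ∈ s, (∏ k ∈ s.erase i, F k) • D (F i) := by
  induction s using Finset.induction_on with
  | empty => simp
  | insert a s ha ih =>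
    rw [Finset.prod_insert ha, D.leibniz, ih, Finset.sum_insert ha, Finset.erase_insert ha,
      Finset.smul_sum, add_comm]
    congr 1
    refine Finset.sum_congr rfl fun i hi => ?_
    rw [Finset.erase_insert_of_ne (ne_of_mem_of_not_mem hi ha).symm,
      Finset.prod_insert (fun h => ha (Finset.mem_of_mem_erase h)), mul_smul]

theorem formalGradient_prod [Fintype ι] [DecidableEq ι] (F : ι → MvPolynomial σ R) :
    formalGradient (∏ j, F j) = logMap F (fun j => formalGradient (F j)) 1 := by
  ext1 t
  simp [formalGradient, logMap_apply, derivation_prod, cofactor]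

variable [Fintype σ]

/-- The module of Jacobian syzygies `D₀(f) = {u | ∑ₜ uₜ ∂ₜf = 0}`. -/
noncomputable def jacobianSyzygies (f : MvPolynomial σ R) :
    Submodule (MvPolynomial σ R) (σ → MvPolynomial σ R) :=
  LinearMap.ker (Fintype.linearCombination (MvPolynomial σ R) (formalGradient f))

theorem mem_jacobianSyzygies {f : MvPolynomial σ R} {u : σ → MvPolynomial σ R} :
    u ∈ jacobianSyzygies f ↔ u ⬝ᵥ formalGradient f = 0 :=
  Iff.rfl

theorem X_dotProduct_formalGradient {g : MvPolynomial σ R} {n : ℕ} (hg : g.IsHomogeneous n) :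
    X ⬝ᵥ formalGradient g = n * g := by
  rw [← nsmul_eq_mul]
  exact hg.sum_X_mul_pderiv

end JacobianSyzygies

section LogarithmicForms

open scoped Matrix

variable {R K ι : Type*} [Fintype ι] [DecidableEq ι]

theorem prod_smul_mem_range_logMap {M : Type*} [CommRing R] [AddCommGroup M] [Module R M]
    (F : ι → R) {v : ι → M} (hspan : Submodule.span R (Set.range v) = ⊤) (u : M) :
    (∏ k, F k) • u ∈ LinearMap.range (logMap F v) := by
  obtain ⟨c, rfl⟩ := (Submodule.mem_span_range_iff_exists_fun R).1
    (hspan ▸ Submodule.mem_top (x := u))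
  exact ⟨F * c, logMap_mul F v c⟩

theorem cofactor_mul_smul_mem_range_logMap [CommRing R] {F : ι → R} {v : ι → Fin 3 → R}
    (hspan : Submodule.span R (Set.range v) = ⊤) {i : ι} {w z : Fin 3 → R}
    (hz : w ⨯₃ v i = F i • z) (t : Fin 3) :
    (cofactor F i * v i t) • w ∈ LinearMap.range (logMap F v) := by
  have hdecomp : (cofactor F i * v i t) • w =
      w t • cofactor F i • v i + (∏ k, F k) • (Pi.single t 1 ⨯₃ z) := by
    rw [mul_smul, smul_eq_smul_add_single_cross (v i) w t, hz, map_smul, ← mul_cofactor F i]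
    module
  rw [hdecomp]
  exact add_mem (Submodule.smul_mem _ _ (cofactor_smul_mem_range_logMap F v i))
    (prod_smul_mem_range_logMap F hspan _)

theorem prod_erase_erase_mul_smul_mem_range_logMap [CommRing R] [DecompositionMonoid R]
    {F : ι → R} {v : ι → Fin 3 → R} (hspan : Submodule.span R (Set.range v) = ⊤) {i j : ι}
    (hij : i ≠ j) (hF : IsRelPrime (F i) (F j)) {w zi zj : Fin 3 → R}
    (hi : w ⨯₃ v i = F i • zi) (hj : w ⨯₃ v j = F j • zj) (t : Fin 3) :
    ((∏ k ∈ (Finset.univ.erase j).erase i, F k) * (v i ⨯₃ v j) t) • w ∈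
      LinearMap.range (logMap F v) := by
  set c := ∏ k ∈ (Finset.univ.erase j).erase i, F k with hc
  have hci : F i * c = cofactor F j := mul_prod_erase_erase F hij
  have hcj : F j * c = cofactor F i := by
    rw [hc, Finset.erase_right_comm, mul_prod_erase_erase F hij.symm]
  have htriple : F i * F j ∣ v i ⨯₃ v j ⬝ᵥ w := by
    rw [dotProduct_comm, triple_product_permutation]
    refine hF.mul_dvd ⟨v j ⬝ᵥ zi, ?_⟩ ⟨-(v i ⬝ᵥ zj), ?_⟩
    · rw [triple_product_permutation, hi, dotProduct_smul, smul_eq_mul]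
    · rw [← cross_anticomm, hj, dotProduct_neg, dotProduct_smul, smul_eq_mul, mul_neg]
  obtain ⟨q, hq⟩ := htriple
  set u : Fin 3 → R := Pi.single t 1
  have hu : v i ⨯₃ v j ⬝ᵥ u = (v i ⨯₃ v j) t := dotProduct_single_one _ _
  have hdecomp : (c * (v i ⨯₃ v j) t) • w = (zj ⬝ᵥ u) • cofactor F i • v i +
      -(zi ⬝ᵥ u) • cofactor F j • v j + (∏ k, F k) • q • u := by
    rw [mul_smul, ← hu, cross_dotProduct_smul, hq, hj, ← cross_anticomm w (v i), hi,
      ← mul_cofactor F i, ← hci, ← hcj]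
    simp only [neg_dotProduct, smul_dotProduct, smul_eq_mul]
    module
  rw [hdecomp]
  exact add_mem (add_mem (Submodule.smul_mem _ _ (cofactor_smul_mem_range_logMap F v i))
    (Submodule.smul_mem _ _ (cofactor_smul_mem_range_logMap F v j)))
    (prod_smul_mem_range_logMap F hspan _)

theorem map_cross_apply {A : Type*} [CommRing R] [CommRing A] (φ : R →+* A) (u v : Fin 3 → R)
    (t : Fin 3) : φ ((u ⨯₃ v) t) = ((fun s => φ (u s)) ⨯₃ fun s => φ (v s)) t := by
  fin_cases t <;> simp [cross_apply]

theorem map_prod_or_map_cofactor_or_map_cross_ne_zero [CommRing R] [Field K] (φ : R →+* K)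
    {F : ι → R} {v : ι → Fin 3 → R} (hsmooth : ∀ j, ∃ t, φ (v j t) ≠ 0)
    (htrans : ∀ i j, i ≠ j → φ (F i) = 0 → φ (F j) = 0 →
      LinearIndependent K ![fun t => φ (v i t), fun t => φ (v j t)])
    (htriple : ∀ i j k, i ≠ j → i ≠ k → j ≠ k → ¬(φ (F i) = 0 ∧ φ (F j) = 0 ∧ φ (F k) = 0)) :
    φ (∏ k, F k) ≠ 0 ∨ (∃ i t, φ (cofactor F i * v i t) ≠ 0) ∨
      ∃ i j, i ≠ j ∧
        ∃ t, φ ((∏ k ∈ (Finset.univ.erase j).erase i, F k) * (v i ⨯₃ v j) t) ≠ 0 := by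
  by_cases h₁ : ∃ i, φ (F i) = 0
  swap
  · push Not at h₁
    exact .inl (by rw [map_prod]; exact Finset.prod_ne_zero_iff.2 fun i _ => h₁ i)
  obtain ⟨i, hi⟩ := h₁
  by_cases h₂ : ∃ j, i ≠ j ∧ φ (F j) = 0
  · obtain ⟨j, hij, hj⟩ := h₂
    obtain ⟨t, ht⟩ := Function.ne_iff.1
      (crossProduct_ne_zero_iff_linearIndependent.2 (htrans i j hij hi hj))
    refine .inr (.inr ⟨i, j, hij, t, ?_⟩)
    rw [map_mul, map_prod]
    refine mul_ne_zero (Finset.prod_ne_zero_iff.2 fun k hk hk₀ => ?_) ?_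
    · rw [Finset.mem_erase, Finset.mem_erase] at hk
      exact htriple i j k hij hk.1.symm hk.2.1.symm ⟨hi, hj, hk₀⟩
    · rwa [map_cross_apply]
  · push Not at h₂
    obtain ⟨t, ht⟩ := hsmooth i
    refine .inr (.inl ⟨i, t, ?_⟩)
    rw [map_mul, cofactor, map_prod]
    exact mul_ne_zero
      (Finset.prod_ne_zero_iff.2 fun k hk => h₂ k (Finset.ne_of_mem_erase hk).symm) ht

end LogarithmicForms

section NormalCrossing

open scoped Matrix

variable {ι K : Type*} [Field K]

/-- The curves `f_j = 0` in the projective plane are smooth, meet transversally, and no three of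
them pass through a common point. Points are represented by nonzero vectors of `K³`. -/
structure IsNormalCrossing (F : ι → MvPolynomial (Fin 3) K) : Prop where
  smooth : ∀ j p, (∀ t, eval p (pderiv t (F j)) = 0) → p = 0
  transversal : ∀ i j, i ≠ j → ∀ p : Fin 3 → K, p ≠ 0 → eval p (F i) = 0 → eval p (F j) = 0 →
    LinearIndependent K ![fun t => eval p (pderiv t (F i)), fun t => eval p (pderiv t (F j))]
  no_triple_point : ∀ i j k, i ≠ j → i ≠ k → j ≠ k → ∀ p : Fin 3 → K, p ≠ 0 →
    ¬(eval p (F i) = 0 ∧ eval p (F j) = 0 ∧ eval p (F k) = 0)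

namespace IsNormalCrossing

variable {F : ι → MvPolynomial (Fin 3) K} (hF : IsNormalCrossing F)

include hF

theorem ne_zero (j : ι) : F j ≠ 0 := fun h =>
  one_ne_zero (hF.smooth j 1 fun t => by rw [h, map_zero, map_zero])

theorem degree_ne_zero {j : ι} {n : ℕ} (hhom : (F j).IsHomogeneous n) : n ≠ 0 := by
  rintro rfl
  rw [← totalDegree_zero_iff_isHomogeneous, totalDegree_eq_zero_iff_eq_C] at hhom
  exact one_ne_zero (hF.smooth j 1 fun t => by rw [hhom, pderiv_C, map_zero])

theorem isUnit_natCast_sum_degree [CharZero K] [Fintype ι] [Nonempty ι] {e : ι → ℕ}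
    (hhom : ∀ j, (F j).IsHomogeneous (e j)) :
    IsUnit ((∑ j, e j : ℕ) : MvPolynomial (Fin 3) K) := by
  obtain ⟨i⟩ := ‹Nonempty ι›
  have hsum : ∑ j, e j ≠ 0 := fun h =>
    hF.degree_ne_zero (hhom i) (Finset.sum_eq_zero_iff.1 h i (Finset.mem_univ i))
  rw [← map_natCast (C (R := K))]
  exact (isUnit_iff_ne_zero.2 (Nat.cast_ne_zero.2 hsum)).map C

theorem isUnit_of_dvd_formalGradient [IsAlgClosed K] (j : ι) (q : MvPolynomial (Fin 3) K)
    (hq : ∀ t, q ∣ formalGradient (F j) t) : IsUnit q := by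
  by_contra hunit
  obtain ⟨p, hp, hpq⟩ := exists_ne_zero_eval_eq_zero hunit
  exact hp (hF.smooth j p fun t => zero_dvd_iff.1 (hpq ▸ map_dvd (eval p) (hq t)))

theorem isRelPrime [IsAlgClosed K] : Pairwise fun i j => IsRelPrime (F i) (F j) := by
  rintro i j hij q ⟨a, ha⟩ ⟨b, hb⟩
  by_contra hunit
  obtain ⟨p, hp, hpq⟩ := exists_ne_zero_eval_eq_zero hunit
  have hgrad (c : MvPolynomial (Fin 3) K) : (fun t => eval p (pderiv t (q * c))) =
      eval p c • fun t => eval p (pderiv t q) := by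
    ext t
    simp [hpq]
  refine crossProduct_ne_zero_iff_linearIndependent.2 (hF.transversal i j hij p hp ?_ ?_) ?_
  · rw [ha, map_mul, hpq, zero_mul]
  · rw [hb, map_mul, hpq, zero_mul]
  · rw [ha, hb, hgrad, hgrad, map_smul, map_smul, LinearMap.smul_apply, cross_self, smul_zero,
      smul_zero]

theorem mem_range_logMap [IsAlgClosed K] [Fintype ι] [DecidableEq ι]
    (hspan : Submodule.span (MvPolynomial (Fin 3) K) (Set.range fun j => formalGradient (F j)) = ⊤)
    {w : Fin 3 → MvPolynomial (Fin 3) K}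
    (hw : ∀ j, ∃ z, w ⨯₃ formalGradient (F j) = F j • z) :
    w ∈ LinearMap.range (logMap F fun j => formalGradient (F j)) := by
  set N := LinearMap.range (logMap F fun j => formalGradient (F j))
  choose z hz using hw
  let I := N.comap (LinearMap.toSpanSingleton (MvPolynomial (Fin 3) K) _ w)
  suffices I = ⊤ by simpa [I] using (Ideal.eq_top_iff_one I).1 this
  have hsat (s : MvPolynomial (Fin 3) K) (hs : ∀ t, X t * s ∈ I) : s ∈ I :=
    mem_range_logMap_of_X_smul_mem hF.isRelPrime
      hF.isUnit_of_dvd_formalGradient hF.ne_zero hspan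
      fun t => by rw [← map_smul]; exact hs t
  have hpoint (p : Fin 3 → K) (hp : p ≠ 0) : ∃ s ∈ I, eval p s ≠ 0 := by
    rcases map_prod_or_map_cofactor_or_map_cross_ne_zero (eval p)
      (v := fun j => formalGradient (F j))
      (fun j => by by_contra! h; exact hp (hF.smooth j p h))
      (fun i j hij => hF.transversal i j hij p hp)
      (fun i j k hij hik hjk => hF.no_triple_point i j k hij hik hjk p hp)
      with h | ⟨i, t, h⟩ | ⟨i, j, hij, t, h⟩
    · exact ⟨_, prod_smul_mem_range_logMap F hspan w, h⟩
    · exact ⟨_, cofactor_mul_smul_mem_range_logMap hspan (hz i) t, h⟩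
    · exact ⟨_, prod_erase_erase_mul_smul_mem_range_logMap hspan hij (hF.isRelPrime hij) (hz i)
        (hz j) t, h⟩
  obtain ⟨n, hn⟩ := idealOfVars_pow_le_of_eval_ne_zero hpoint
  exact eq_top_of_idealOfVars_pow_le hsat hn

end IsNormalCrossing

end NormalCrossing

section LinearForms

open scoped Matrix

variable {σ ι K : Type*} [Field K]

theorem span_range_eq_top_of_isUnit_det {R : Type*} [CommRing R] [Fintype σ] [DecidableEq σ]
    {b : σ → σ → R} (hb : IsUnit (Matrix.of b).det) : Submodule.span R (Set.range b) = ⊤ := by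
  refine ((Pi.basisFun R σ).is_basis_iff_det.2 ?_).2
  rwa [Pi.basisFun_det_apply]

theorem span_range_formalGradient_eq_top_of_linear_forms [Finite σ] {L : σ → MvPolynomial σ K}
    (hL : ∀ l, (L l).IsHomogeneous 1) (hzero : ∀ p : σ → K, (∀ l, eval p (L l) = 0) → p = 0) :
    Submodule.span (MvPolynomial σ K) (Set.range fun l => formalGradient (L l)) = ⊤ := by
  classical
  cases nonempty_fintype σ
  let A : Matrix σ σ K := Matrix.of fun l t => coeff 0 (pderiv t (L l))
  have hgrad (l t : σ) : formalGradient (L l) t = C (A l t) := by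
    have h := (hL l).pderiv (i := t)
    rwa [Nat.sub_self, ← totalDegree_zero_iff_isHomogeneous, totalDegree_eq_zero_iff_eq_C] at h
  have heval (p : σ → K) (l : σ) : eval p (L l) = (A *ᵥ p) l := by
    have h := congrArg (eval p) (X_dotProduct_formalGradient (hL l))
    simpa [dotProduct, hgrad, Matrix.mulVec, mul_comm] using h.symm
  have hdet : A.det ≠ 0 := fun h₀ => by
    obtain ⟨p, hp, hAp⟩ := Matrix.exists_mulVec_eq_zero_iff.2 h₀
    exact hp (hzero p fun l => by rw [heval, hAp, Pi.zero_apply])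
  have hmap : Matrix.of (fun l => formalGradient (L l)) = C.mapMatrix A := by
    ext1 l t
    exact hgrad l t
  refine span_range_eq_top_of_isUnit_det ?_
  rw [hmap, ← RingHom.map_det]
  exact (isUnit_iff_ne_zero.2 hdet).map C

theorem IsNormalCrossing.span_range_formalGradient_eq_top [Fintype ι]
    {F : ι → MvPolynomial (Fin 3) K} (hF : IsNormalCrossing F) {e : ι → ℕ}
    (hhom : ∀ j, (F j).IsHomogeneous (e j))
    (hlines : 3 ≤ (Finset.univ.filter fun j => e j = 1).card) :
    Submodule.span (MvPolynomial (Fin 3) K) (Set.range fun j => formalGradient (F j)) = ⊤ := by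
  obtain ⟨a, ha, b, hb, c, hc, hab, hac, hbc⟩ := Finset.two_lt_card.1 hlines
  rw [Finset.mem_filter_univ] at ha hb hc
  have hlin (l : Fin 3) : (F (![a, b, c] l)).IsHomogeneous 1 := by
    fin_cases l
    exacts [ha ▸ hhom a, hb ▸ hhom b, hc ▸ hhom c]
  have hle := Submodule.span_mono (R := MvPolynomial (Fin 3) K)
    (Set.range_comp_subset_range ![a, b, c] fun j => formalGradient (F j))
  refine top_le_iff.1 (hle.trans' (span_range_formalGradient_eq_top_of_linear_forms hlin
    fun p hp => ?_).ge)
  by_contra hne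
  exact hF.no_triple_point a b c hab hac hbc p hne ⟨hp 0, hp 1, hp 2⟩

end LinearForms

section Syzygies

open scoped Matrix

variable {σ ι R K : Type*} [Fintype ι] [DecidableEq ι]

theorem X_dotProduct_logMap_formalGradient [Fintype σ] [CommRing R] {F : ι → MvPolynomial σ R}
    {e : ι → ℕ} (hhom : ∀ j, (F j).IsHomogeneous (e j)) (g : ι → MvPolynomial σ R) :
    X ⬝ᵥ logMap F (fun j => formalGradient (F j)) g = (∏ k, F k) * ∑ j, g j * e j := by
  rw [logMap_apply, dotProduct_sum, Finset.mul_sum]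
  refine Finset.sum_congr rfl fun j _ => ?_
  rw [dotProduct_smul, dotProduct_smul, X_dotProduct_formalGradient (hhom j), ← mul_cofactor F j,
    smul_eq_mul, smul_eq_mul]
  ring

omit [DecidableEq ι] in
theorem dvd_dotProduct_formalGradient [Fintype σ] [CommRing R]
    [DecompositionMonoid (MvPolynomial σ R)] {F : ι → MvPolynomial σ R}
    (hF : Pairwise fun i j => IsRelPrime (F i) (F j)) {u : σ → MvPolynomial σ R}
    (hu : u ∈ jacobianSyzygies (∏ k, F k)) (j : ι) : F j ∣ u ⬝ᵥ formalGradient (F j) := by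
  classical
  refine dvd_of_sum_mul_cofactor_eq_zero hF (a := fun j => u ⬝ᵥ formalGradient (F j)) ?_ j
  rw [mem_jacobianSyzygies, formalGradient_prod, logMap_apply, dotProduct_sum] at hu
  simpa [mul_comm] using hu

theorem logSyzygy_mem_jacobianSyzygies [CommRing R] [IsDomain R] {F : ι → MvPolynomial (Fin 3) R}
    (hF₀ : ∀ j, F j ≠ 0) (j : ι) :
    logSyzygy F (fun j => formalGradient (F j)) j ∈ jacobianSyzygies (∏ k, F k) := by
  rw [mem_jacobianSyzygies, formalGradient_prod]
  exact logSyzygy_dotProduct_logMap_one hF₀ _ j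

namespace IsNormalCrossing

variable [Field K] [IsAlgClosed K] [CharZero K] {F : ι → MvPolynomial (Fin 3) K}
  (hF : IsNormalCrossing F) {e : ι → ℕ} (hhom : ∀ j, (F j).IsHomogeneous (e j))

include hF hhom

theorem jacobianSyzygies_eq_span [Nonempty ι]
    (hspan : Submodule.span (MvPolynomial (Fin 3) K)
      (Set.range fun j => formalGradient (F j)) = ⊤) :
    jacobianSyzygies (∏ k, F k) = Submodule.span (MvPolynomial (Fin 3) K)
      (Set.range (logSyzygy F fun j => formalGradient (F j))) := by
  refine le_antisymm (fun u hu => ?_) (Submodule.span_le.2 ?_)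
  swap
  · rintro _ ⟨j, rfl⟩
    exact logSyzygy_mem_jacobianSyzygies hF.ne_zero j
  have hlog (j : ι) : ∃ z, (u ⨯₃ X) ⨯₃ formalGradient (F j) = F j • z := by
    obtain ⟨c, hc⟩ := dvd_dotProduct_formalGradient hF.isRelPrime hu j
    refine ⟨c • X - (e j : MvPolynomial (Fin 3) K) • u, ?_⟩
    rw [cross_cross_eq_smul_sub_smul, hc, X_dotProduct_formalGradient (hhom j)]
    module
  obtain ⟨g, hg⟩ := hF.mem_range_logMap hspan hlog
  have hf₀ : ∏ k, F k ≠ 0 := Finset.prod_ne_zero_iff.2 fun j _ => hF.ne_zero j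
  have hcomb : ((∑ j, e j : ℕ) : MvPolynomial (Fin 3) K) • u =
      ∑ j, g j • logSyzygy F (fun j => formalGradient (F j)) j := by
    have hcross := logMap_one_cross_logMap F (fun j => formalGradient (F j)) g
    rw [hg, ← formalGradient_prod, cross_cross_eq_smul_sub_smul', dotProduct_comm,
      X_dotProduct_formalGradient (.prod Finset.univ F e fun j _ => hhom j),
      mem_jacobianSyzygies.1 hu, zero_smul, sub_zero, mul_comm, mul_smul] at hcross
    exact smul_right_injective _ hf₀ hcross
  rw [← Submodule.smul_mem_iff_of_isUnit _ (hF.isUnit_natCast_sum_degree hhom), hcomb]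
  exact sum_mem fun j _ => Submodule.smul_mem _ _ (Submodule.subset_span ⟨j, rfl⟩)

theorem constantCoeff_eq_of_sum_smul_logSyzygy_eq_zero {g : ι → MvPolynomial (Fin 3) K}
    (hg : ∑ j, g j • logSyzygy F (fun j => formalGradient (F j)) j = 0) (i j : ι) :
    constantCoeff (g i) = constantCoeff (g j) := by
  set v := fun j => formalGradient (F j)
  set q := ∑ j, g j * e j
  set d : MvPolynomial (Fin 3) K := ∑ j, (e j : MvPolynomial (Fin 3) K) with hd
  have hf₀ : ∏ k, F k ≠ 0 := Finset.prod_ne_zero_iff.2 fun j _ => hF.ne_zero j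
  have hlog : logMap F v (d • g - q • 1) = 0 := by
    have hcross : logMap F v 1 ⨯₃ logMap F v g = 0 := by
      rw [logMap_one_cross_logMap, hg, smul_zero]
    have hcontract := cross_cross_eq_smul_sub_smul (logMap F v 1) (logMap F v g) X
    simp only [hcross, map_zero, LinearMap.zero_apply, dotProduct_comm _ X, v, Pi.one_apply,
      X_dotProduct_logMap_formalGradient hhom, one_mul, mul_smul, ← smul_sub] at hcontract
    rw [map_sub, map_smul, map_smul]
    exact (smul_eq_zero.1 hcontract.symm).resolve_left hf₀
  have hconst (j : ι) : constantCoeff d * constantCoeff (g j) = constantCoeff q := by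
    obtain ⟨c, hc⟩ := dvd_of_logMap_eq_zero hF.isRelPrime hF.isUnit_of_dvd_formalGradient hlog j
    have hFj : constantCoeff (F j) = 0 :=
      (hhom j).coeff_eq_zero (by simpa using (hF.degree_ne_zero (hhom j)).symm)
    have := congrArg constantCoeff hc
    simpa [hFj, sub_eq_zero] using this
  have : Nonempty ι := ⟨i⟩
  have hd₀ : constantCoeff d ≠ 0 := by
    simpa [hd] using ((hF.isUnit_natCast_sum_degree hhom).map constantCoeff).ne_zero
  exact mul_left_cancel₀ hd₀ ((hconst i).trans (hconst j).symm)

end IsNormalCrossing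

end Syzygies

section MinimalSyzygies

variable {ι κ K : Type*} [Fintype ι] [DecidableEq ι] [Fintype κ] [Field K] [IsAlgClosed K]
  [CharZero K]

theorem caseL3_minimal_generators_general {F : ι → MvPolynomial (Fin 3) K}
    (hF : IsNormalCrossing F) {e : ι → ℕ} (hhom : ∀ j, (F j).IsHomogeneous (e j))
    (hlines : 3 ≤ (Finset.univ.filter fun j => e j = 1).card)
    {s : κ → ι} (hs : Function.Injective s) {o : ι} (hso : Set.range s = {o}ᶜ) :
    let ρ : κ → Fin 3 → MvPolynomial (Fin 3) K :=
      fun j => logSyzygy F (fun i => formalGradient (F i)) (s j)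
    jacobianSyzygies (∏ i, F i) = Submodule.span (MvPolynomial (Fin 3) K) (Set.range ρ) ∧
    (∀ i, ρ i ∉ Submodule.span (MvPolynomial (Fin 3) K) (ρ '' {i}ᶜ)) ∧
    ∀ T : Finset (Fin 3 → MvPolynomial (Fin 3) K),
      Submodule.span (MvPolynomial (Fin 3) K) (T : Set (Fin 3 → MvPolynomial (Fin 3) K)) =
        jacobianSyzygies (∏ i, F i) → Fintype.card κ ≤ T.card := by
  intro ρ
  have : Nonempty ι := ⟨o⟩
  have hgen : jacobianSyzygies (∏ i, F i) =
      Submodule.span (MvPolynomial (Fin 3) K) (Set.range ρ) := by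
    rw [hF.jacobianSyzygies_eq_span hhom (hF.span_range_formalGradient_eq_top hhom hlines)]
    exact (span_range_comp_eq_of_sum_eq_zero (sum_logSyzygy hF.ne_zero _) hso.ge).symm
  have hrel (g : κ → MvPolynomial (Fin 3) K) (hg : ∑ j, g j • ρ j = 0) (j : κ) :
      constantCoeff (g j) = 0 :=
    map_coeff_eq_zero_of_sum_comp_eq_zero
      (fun _ => hF.constantCoeff_eq_of_sum_smul_logSyzygy_eq_zero hhom) hs
      (o := o) (by simp [hso]) hg j
  exact ⟨hgen, notMem_span_image_compl hrel,
    fun T hT => card_le_card_of_span_eq_span_range hrel (hT.trans hgen)⟩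

end MinimalSyzygies

/-- if `ℓ(C) ≥ 3` (at least three of the degrees `e_j` equal 1), then
`D₀(f)` is generated by `G = {ρ_1, …, ρ_{m−1}}`, this generating set is minimal, and every
generating set of `D₀(f)` has at least `m − 1` elements, so `C` is an `(m−1)`-syzygy curve
with exponents `d_1 = ⋯ = d_{m−1} = d−2`. -/
theorem caseL3_minimal_generators
    (m : ℕ) (hm : 4 ≤ m) (F : Fin m → S) (e : Fin m → ℕ)
    (he : ∀ j, 1 ≤ e j)
    (hhom : ∀ j, (F j).IsHomogeneous (e j))
    (hsmooth : ∀ j, ∀ p : Fin 3 → ℂ,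
      (∀ t, eval p (pderiv t (F j)) = 0) → p = 0)
    (hnc : ∀ i j : Fin m, i ≠ j → ∀ p : Fin 3 → ℂ, p ≠ 0 →
      eval p (F i) = 0 → eval p (F j) = 0 →
      LinearIndependent ℂ
        ![fun t => eval p (pderiv t (F i)), fun t => eval p (pderiv t (F j))])
    (htriple : ∀ i j k : Fin m, i ≠ j → i ≠ k → j ≠ k → ∀ p : Fin 3 → ℂ, p ≠ 0 →
      ¬(eval p (F i) = 0 ∧ eval p (F j) = 0 ∧ eval p (F k) = 0))
    (hl3 : 3 ≤ (Finset.univ.filter (fun j => e j = 1)).card) :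
    D0 (∏ i, F i) = Submodule.span S
        (Set.range (fun j : Fin (m - 1) => rho F (Fin.castLE (Nat.sub_le m 1) j))) ∧
    (∀ i : Fin (m - 1), rho F (Fin.castLE (Nat.sub_le m 1) i) ∉
      Submodule.span S ((fun j : Fin (m - 1) => rho F (Fin.castLE (Nat.sub_le m 1) j)) '' {i}ᶜ)) ∧
    (∀ T : Finset (Fin 3 → S),
      Submodule.span S (T : Set (Fin 3 → S)) = D0 (∏ i, F i) → m - 1 ≤ T.card) := by
  obtain ⟨n, rfl⟩ : ∃ n, m = n + 1 := Nat.exists_eq_succ_of_ne_zero (by omega)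
  have hrange : Set.range Fin.castSucc = {Fin.last n}ᶜ := by
    rw [← Fin.succAbove_last, Fin.range_succAbove]
  have h := caseL3_minimal_generators_general ⟨hsmooth, hnc, htriple⟩ hhom hl3
    (Fin.castSucc_injective n) hrange
  rwa [Fintype.card_fin] at h
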